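/- arXiv:1611.02249 — 2 statements merged into one kernel-verified Lean document; each statement's English description precedes it below -/
import Mathlib

section
/- Let S be Douthett's parsimonious relation P_{1,0} on the 28-element set H of major, minor, and augmented triads, and let M_S = {1, S, S², S³, S⁴, S⁵, S⁶} be the submonoid it generates. An element R of M_S relates the A major triad 9_M to the F♯ major triad 6_M (i.e. 9_M R 6_M) if and only if R = S³ or R = S⁵. -/
/-- The 28-element set of the 24 major and minor triads and the 4 augmented triads:
`Sum.inl n` is the major triad `n_M`, `Sum.inr (Sum.inl n)` is the minor triad `n_m`,
and `Sum.inr (Sum.inr k)` is the augmented triad `k_aug`. -/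
abbrev Htriads : Type := (ZMod 12) ⊕ (ZMod 12) ⊕ (ZMod 4)

/-- Binary relations on `Htriads`. -/
abbrev MRel : Type := Htriads → Htriads → Prop

/-- The monoid of binary relations on `Htriads`: `r * s` relates `x` to `z` iff there is `y`
with `x r y` and `y s z` (i.e. first apply `r`, then `s`), and `1` is the equality relation. -/
instance : Monoid MRel where
  one := fun x y => x = y
  mul := fun r s => fun x z => ∃ y, r x y ∧ s y z
  mul_assoc r s t := by
    funext x z
    apply propext
    constructor
    · rintro ⟨y, ⟨w, hw1, hw2⟩, hy⟩
      exact ⟨w, hw1, y, hw2, hy⟩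
    · rintro ⟨w, hw1, y, hy1, hy2⟩
      exact ⟨y, ⟨w, hw1, hy1⟩, hy2⟩
  one_mul r := by
    funext x z
    apply propext
    constructor
    · rintro ⟨y, rfl, h⟩
      exact h
    · intro h
      exact ⟨x, rfl, h⟩
  mul_one r := by
    funext x z
    apply propext
    constructor
    · rintro ⟨y, h, rfl⟩
      exact h
    · intro h
      exact ⟨z, h, rfl⟩

/-- The major triad on root `n`. -/
def maj (n : ZMod 12) : Htriads := Sum.inl n
/-- The minor triad on root `n`. -/
def mino (n : ZMod 12) : Htriads := Sum.inr (Sum.inl n)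
/-- The augmented triad `k_aug`, `k ∈ ℤ/4`. -/
def aug (k : ZMod 4) : Htriads := Sum.inr (Sum.inr k)

/-- Reduction mod 4 of a pitch class mod 12. -/
def m4 (n : ZMod 12) : ZMod 4 := ZMod.castHom (show (4:ℕ) ∣ 12 by norm_num) (ZMod 4) n

/-- The relation `𝒰`: the symmetric relation relating exactly `n_M` with `(n mod 4)_aug`
and `n_m` with `((n+3) mod 4)_aug`. -/
def Urel : MRel := fun x y =>
  (∃ n : ZMod 12, x = maj n ∧ y = aug (m4 n)) ∨
  (∃ n : ZMod 12, x = aug (m4 n) ∧ y = maj n) ∨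
  (∃ n : ZMod 12, x = mino n ∧ y = aug (m4 (n + 3))) ∨
  (∃ n : ZMod 12, x = aug (m4 (n + 3)) ∧ y = mino n)

/-- The relation `𝒫`: the symmetric relation relating exactly `n_M` with `n_m`,
and each augmented triad with itself. -/
def Prel : MRel := fun x y =>
  (∃ n : ZMod 12, x = maj n ∧ y = mino n) ∨
  (∃ n : ZMod 12, x = mino n ∧ y = maj n) ∨
  (∃ k : ZMod 4, x = aug k ∧ y = aug k)

/-- The relation `ℒ`: the symmetric relation relating exactly `n_M` with `(n+4)_m`,
and each augmented triad with itself. -/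
def Lrel : MRel := fun x y =>
  (∃ n : ZMod 12, x = maj n ∧ y = mino (n + 4)) ∨
  (∃ n : ZMod 12, x = mino (n + 4) ∧ y = maj n) ∨
  (∃ k : ZMod 4, x = aug k ∧ y = aug k)

/-- Douthett's parsimonious relation `𝒮 = P_{1,0}` on major, minor and augmented triads. -/
def Srel : MRel := fun x y =>
  (∃ n : ZMod 12, x = maj n ∧ y = mino n) ∨
  (∃ n : ZMod 12, x = mino n ∧ y = maj n) ∨
  (∃ n : ZMod 12, x = maj n ∧ y = mino (n + 4)) ∨
  (∃ n : ZMod 12, x = mino (n + 4) ∧ y = maj n) ∨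
  (∃ n : ZMod 12, x = maj n ∧ y = aug (m4 n)) ∨
  (∃ n : ZMod 12, x = aug (m4 n) ∧ y = maj n) ∨
  (∃ n : ZMod 12, x = mino n ∧ y = aug (m4 (n + 3))) ∨
  (∃ n : ZMod 12, x = aug (m4 (n + 3)) ∧ y = mino n)

/-- Douthett's parsimonious relation `𝒯 = P_{2,0}` on major, minor and augmented triads. -/
def Trel : MRel := fun x y =>
  (∃ n : ZMod 12, x = maj n ∧ y = maj (n + 4)) ∨
  (∃ n : ZMod 12, x = maj n ∧ y = maj (n + 8)) ∨
  (∃ n : ZMod 12, x = maj n ∧ y = mino (n + 1)) ∨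
  (∃ n : ZMod 12, x = mino (n + 1) ∧ y = maj n) ∨
  (∃ n : ZMod 12, x = maj n ∧ y = mino (n + 5)) ∨
  (∃ n : ZMod 12, x = mino (n + 5) ∧ y = maj n) ∨
  (∃ n : ZMod 12, x = maj n ∧ y = aug (m4 (n + 3))) ∨
  (∃ n : ZMod 12, x = aug (m4 (n + 3)) ∧ y = maj n) ∨
  (∃ n : ZMod 12, x = mino n ∧ y = mino (n + 4)) ∨
  (∃ n : ZMod 12, x = mino n ∧ y = mino (n + 8)) ∨
  (∃ n : ZMod 12, x = mino n ∧ y = aug (m4 n)) ∨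
  (∃ n : ZMod 12, x = aug (m4 n) ∧ y = mino n)

def enc : Htriads → ℕ
  | Sum.inl n => n.val
  | Sum.inr (Sum.inl n) => 12 + n.val
  | Sum.inr (Sum.inr n) => 24 + n.val

def bt (t : List ℕ) (x y : Htriads) : Bool := Nat.testBit (t.getD (enc x) 0) (enc y)

/-- The bipartition of the graph of `Srel`. -/
def col (x : Htriads) : Bool := Nat.testBit (89479850) (enc x)

def tab1 : List ℕ := [16846848, 33693696, 67387392, 134774784, 17891328, 35782656, 71565312, 143130624, 17829888, 35659776, 71319552, 142639104, 134217985, 16777730, 33555460, 67110920, 134217745, 16777250, 33554500, 67109000, 134218000, 16777760, 33555520, 67111040, 2236689, 4473378, 8946756, 1120392]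

def tab2 : List ℕ := [136454417, 21250594, 42501188, 68229256, 136454417, 21250594, 42501188, 68229256, 136454417, 21250594, 42501188, 68229256, 17897608, 35791121, 71582242, 143164484, 17897608, 35791121, 71582242, 143164484, 17897608, 35791121, 71582242, 143164484, 17895970, 35791940, 71583880, 143163665]

def tab4 : List ℕ := [178954513, 89477666, 178955332, 89479304, 178954513, 89477666, 178955332, 89479304, 178954513, 89477666, 178955332, 89479304, 85007018, 170009941, 88361642, 176719189, 85007018, 170009941, 88361642, 176719189, 85007018, 170009941, 88361642, 176719189, 22370986, 44737877, 72702634, 145401173]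

instance decS : ∀ x y, Decidable (Srel x y) := fun x y => by
  unfold Srel
  repeat' refine @instDecidableOr _ _ ?_ ?_
  all_goals infer_instance

set_option maxRecDepth 100000

lemma S_of_tab : ∀ x y, bt tab1 x y = true → Srel x y := by decide +kernel

lemma tab2_split : ∀ x z, bt tab2 x z = true → ∃ y, bt tab1 x y = true ∧ bt tab1 y z = true := by
  decide +kernel

lemma tab4_split : ∀ x z, bt tab4 x z = true → ∃ y, bt tab2 x y = true ∧ bt tab2 y z = true := by
  decide +kernel

lemma col_split : ∀ x z, col x ≠ col z → ∃ y, bt tab4 x y = true ∧ bt tab1 y z = true := by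
  decide +kernel

lemma col_of_S : ∀ x y, Srel x y → col x ≠ col y := by decide +kernel

lemma exists_nbr : ∀ x, ∃ y, Srel y x := by decide +kernel

lemma tab3_ex : ∃ y, bt tab2 (maj 9) y = true ∧ bt tab1 y (maj 6) = true := by decide +kernel

lemma not_S : ¬ Srel (maj 9) (maj 6) := by decide +kernel

lemma col96 : col (maj 9) ≠ col (maj 6) := by decide +kernel

lemma S2_of_tab (x z : Htriads) (h : bt tab2 x z = true) : (Srel ^ 2) x z := by
  rw [pow_two]
  obtain ⟨y, h1, h2⟩ := tab2_split x z h
  exact ⟨y, S_of_tab _ _ h1, S_of_tab _ _ h2⟩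

lemma S4_of_tab (x z : Htriads) (h : bt tab4 x z = true) : (Srel ^ 4) x z := by
  rw [show 4 = 2 + 2 from rfl, pow_add]
  obtain ⟨y, h1, h2⟩ := tab4_split x z h
  exact ⟨y, S2_of_tab _ _ h1, S2_of_tab _ _ h2⟩

lemma S5_of_col (x z : Htriads) (h : col x ≠ col z) : (Srel ^ 5) x z := by
  rw [pow_succ]
  obtain ⟨y, h1, h2⟩ := col_split x z h
  exact ⟨y, S4_of_tab _ _ h1, S_of_tab _ _ h2⟩

lemma S3_96 : (Srel ^ 3) (maj 9) (maj 6) := by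
  rw [pow_succ]
  obtain ⟨y, h1, h2⟩ := tab3_ex
  exact ⟨y, S2_of_tab _ _ h1, S_of_tab _ _ h2⟩

lemma col_pow (n : ℕ) : ∀ x z, (Srel ^ n) x z → (col x = col z ↔ Even n) := by
  induction n with
  | zero =>
    intro x z h
    rw [pow_zero] at h
    have h' : x = z := h
    simp [h']
  | succ n ih =>
    intro x z h
    rw [pow_succ] at h
    obtain ⟨y, h1, h2⟩ := h
    have h3 := ih x y h1
    have h4 := col_of_S y z h2
    rw [Nat.even_add_one, ← h3]
    revert h4
    cases col x <;> cases col y <;> cases col z <;> simp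

lemma pow_full (n : ℕ) : ∀ x z, (col x = col z ↔ Even (n + 5)) → (Srel ^ (n + 5)) x z := by
  induction n with
  | zero =>
    intro x z h
    exact S5_of_col x z (fun h' => absurd (h.1 h') (by decide))
  | succ n ih =>
    intro x z h
    rw [show n + 1 + 5 = (n + 5) + 1 by ring] at h ⊢
    rw [pow_succ]
    obtain ⟨y, hy⟩ := exists_nbr z
    refine ⟨y, ih x y ?_, hy⟩
    have h4 := col_of_S y z hy
    rw [Nat.even_add_one] at h
    revert h4 h
    cases col x <;> cases col y <;> cases col z <;> simp

lemma pow_odd (n : ℕ) (h5 : 5 ≤ n) (hn : ¬ Even n) : Srel ^ n = Srel ^ 5 := by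
  obtain ⟨k, rfl⟩ := Nat.exists_eq_add_of_le' h5
  funext x z
  apply propext
  constructor
  · intro h
    exact S5_of_col x z (fun h' => hn ((col_pow _ x z h).1 h'))
  · intro h
    refine pow_full k x z ?_
    rw [col_pow 5 x z h]
    exact iff_of_false (by decide) hn

/-- an element `R` of the submonoid generated by `S` relates the A major
triad `9_M` to the F♯ major triad `6_M` iff `R = S³` or `R = S⁵`. -/
theorem stmt17 (R : MRel) (hR : R ∈ Submonoid.closure ({Srel} : Set MRel)) :
    R (maj 9) (maj 6) ↔ (R = Srel ^ 3 ∨ R = Srel ^ 5) := by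
  obtain ⟨n, rfl⟩ := Submonoid.mem_closure_singleton.1 hR
  constructor
  · intro h
    have hn : ¬ Even n := fun h' => col96 ((col_pow n _ _ h).2 h')
    by_cases h5 : 5 ≤ n
    · exact Or.inr (pow_odd n h5 hn)
    · have h3 : n = 1 ∨ n = 3 := by
        rw [Nat.not_even_iff_odd] at hn
        obtain ⟨k, rfl⟩ := hn
        omega
      rcases h3 with rfl | rfl
      · rw [pow_one] at h
        exact absurd h not_S
      · exact Or.inl rfl
  · rintro (h | h)
    · rw [h]; exact S3_96
    · rw [h]; exact S5_of_col _ _ col96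
end

section
/- Let S and T be Douthett's parsimonious relations P_{1,0} and P_{2,0} on the 28-element set H of major, minor, and augmented triads, and let M_ST be the submonoid of relations on H generated by {S, T}. An element R of M_ST relates the A major triad 9_M to the F♯ major triad 6_M (i.e. 9_M R 6_M) if and only if R = T·S or R = S·T² (products written as words in the monoid; note T·S = S·T). -/
namespace Aux18

/-- Code of a triad as a number below 28. -/
def code : Htriads → ℕ
  | Sum.inl n => n.val
  | Sum.inr (Sum.inl n) => 12 + n.val
  | Sum.inr (Sum.inr n) => 24 + n.val

/-- Inverse of `code`. -/
def decode (k : ℕ) : Htriads :=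
  if k < 12 then Sum.inl (k : ZMod 12)
  else if k < 24 then Sum.inr (Sum.inl ((k - 12 : ℕ) : ZMod 12))
  else Sum.inr (Sum.inr ((k - 24 : ℕ) : ZMod 4))

theorem code_decode : ∀ k < 28, code (decode k) = k := by decide +kernel

theorem code_lt : ∀ x, code x < 28 := by decide +kernel

/-- Relation with given bitmask rows. -/
def toRel (A : List ℕ) : MRel := fun x y => (A.getD (code x) 0).testBit (code y) = true

/-- Union of the rows of `B` selected by `r`. -/
def rowOr (r : ℕ) (B : List ℕ) : ℕ → ℕ
  | 0 => 0
  | n + 1 => (if r.testBit n then B.getD n 0 else 0) ||| rowOr r B n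

theorem rowOr_spec (r : ℕ) (B : List ℕ) (n j : ℕ) :
    (rowOr r B n).testBit j = true ↔ ∃ k < n, r.testBit k = true ∧ (B.getD k 0).testBit j = true := by
  induction n with
  | zero => simp [rowOr]
  | succ n ih =>
    rw [rowOr, Nat.testBit_or, Bool.or_eq_true, ih]
    constructor
    · rintro (h | ⟨k, hk, h⟩)
      · by_cases hr : r.testBit n = true
        · rw [if_pos hr] at h
          exact ⟨n, by omega, hr, h⟩
        · rw [if_neg hr] at h
          simp at h
      · exact ⟨k, by omega, h⟩
    · rintro ⟨k, hk, h1, h2⟩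
      rcases Nat.lt_succ_iff_lt_or_eq.1 hk with h | rfl
      · exact Or.inr ⟨k, h, h1, h2⟩
      · left
        rw [if_pos h1]
        exact h2

/-- Boolean matrix product. -/
def mm (A B : List ℕ) : List ℕ := (List.range 28).map fun i => rowOr (A.getD i 0) B 28

theorem mm_spec (A B : List ℕ) : toRel A * toRel B = toRel (mm A B) := by
  funext x z
  apply propext
  change (∃ y, toRel A x y ∧ toRel B y z) ↔ _
  have h : (mm A B).getD (code x) 0 = rowOr (A.getD (code x) 0) B 28 := by
    have := code_lt x
    simp [mm, List.getD, this]
  unfold toRel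
  rw [h, rowOr_spec]
  constructor
  · rintro ⟨y, h1, h2⟩
    exact ⟨code y, code_lt y, h1, h2⟩
  · rintro ⟨k, hk, h1, h2⟩
    refine ⟨decode k, ?_, ?_⟩ <;> rw [code_decode k hk] <;> assumption

/-- Rows of `Srel`. -/
def SM : List ℕ := [16846848, 33693696, 67387392, 134774784, 17891328, 35782656, 71565312, 143130624, 17829888, 35659776, 71319552, 142639104, 134217985, 16777730, 33555460, 67110920, 134217745, 16777250, 33554500, 67109000, 134218000, 16777760, 33555520, 67111040, 2236689, 4473378, 8946756, 1120392]

/-- Rows of `Trel`. -/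
def TM : List ℕ := [134357264, 17056288, 34112576, 68225152, 136446209, 21234178, 42468356, 68163592, 136323089, 20987938, 41975876, 67178632, 17893504, 35782913, 71565826, 143131652, 17831944, 35659793, 71319586, 142639172, 16846984, 33693968, 67387936, 134775872, 1118754, 2237508, 4475016, 8945937]

set_option synthInstance.maxHeartbeats 400000 in
set_option synthInstance.maxSize 4000 in
instance decS (x y : Htriads) : Decidable (Srel x y) := by
  unfold Srel; infer_instance

set_option synthInstance.maxHeartbeats 400000 in
set_option synthInstance.maxSize 4000 in
instance decT (x y : Htriads) : Decidable (Trel x y) := by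
  unfold Trel; infer_instance

instance decM (A : List ℕ) (x y : Htriads) : Decidable (toRel A x y) := by
  unfold toRel; infer_instance

theorem S_eq : Srel = toRel SM := by
  have h : ∀ x y, Srel x y ↔ toRel SM x y := by
    decide +kernel
  funext x y
  exact propext (h x y)

theorem T_eq : Trel = toRel TM := by
  have h : ∀ x y, Trel x y ↔ toRel TM x y := by
    decide +kernel
  funext x y
  exact propext (h x y)

theorem TS : Trel * Srel = Srel * Trel := by
  rw [S_eq, T_eq, mm_spec, mm_spec]
  exact congrArg toRel (by decide +kernel)

theorem SSS : Srel * Srel * Srel = Srel * Trel := by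
  rw [S_eq, T_eq]; simp only [mm_spec]
  exact congrArg toRel (by decide +kernel)

theorem SST : Srel * Srel * Trel = Trel * Trel := by
  rw [S_eq, T_eq]; simp only [mm_spec]
  exact congrArg toRel (by decide +kernel)

theorem STTT : Srel * Trel * Trel * Trel = Srel * Trel * Trel := by
  rw [S_eq, T_eq]; simp only [mm_spec]
  exact congrArg toRel (by decide +kernel)

theorem TTTT : Trel * Trel * Trel * Trel = Trel * Trel * Trel := by
  rw [T_eq]; simp only [mm_spec]
  exact congrArg toRel (by decide +kernel)

theorem STS : Srel * Trel * Srel = Trel * Trel := by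
  rw [mul_assoc, TS, ← mul_assoc, SST]

theorem TTS : Trel * Trel * Srel = Srel * Trel * Trel := by
  rw [mul_assoc, TS, ← mul_assoc, TS]

theorem STTS : Srel * Trel * Trel * Srel = Trel * Trel * Trel := by
  rw [mul_assoc, TS, ← mul_assoc, STS]

theorem TTTS : Trel * Trel * Trel * Srel = Srel * Trel * Trel := by
  rw [mul_assoc, TS, ← mul_assoc, TTS, STTT]

theorem classify (R : MRel) (hR : R ∈ Submonoid.closure ({Srel, Trel} : Set MRel)) :
    R = 1 ∨ R = Srel ∨ R = Trel ∨ R = Srel * Srel ∨ R = Srel * Trel ∨ R = Trel * Trel ∨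
      R = Srel * Trel * Trel ∨ R = Trel * Trel * Trel := by
  induction hR using Submonoid.closure_induction_right with
  | one => exact Or.inl rfl
  | mul_right x hx y hy ih =>
    rcases hy with rfl | rfl <;>
    rcases ih with rfl | rfl | rfl | rfl | rfl | rfl | rfl | rfl <;>
    simp only [one_mul, TS, SSS, SST, STTT, TTTT, STS, TTS, STTS, TTTS, true_or, or_true]

end Aux18

open Aux18 in
theorem stmt18 (R : MRel) (hR : R ∈ Submonoid.closure ({Srel, Trel} : Set MRel)) :
    R (maj 9) (maj 6) ↔ (R = Trel * Srel ∨ R = Srel * Trel ^ 2) := by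
  rw [TS, pow_two, ← mul_assoc]
  constructor
  · intro h
    rcases classify R hR with rfl | rfl | rfl | rfl | rfl | rfl | rfl | rfl
    · exact absurd (show maj 9 = maj 6 from h) (by decide +kernel)
    · rw [S_eq] at h
      exact absurd h (by unfold toRel; decide +kernel)
    · rw [T_eq] at h
      exact absurd h (by unfold toRel; decide +kernel)
    · rw [S_eq, mm_spec] at h
      exact absurd h (by unfold toRel; decide +kernel)
    · exact Or.inl rfl
    · rw [T_eq, mm_spec] at h
      exact absurd h (by unfold toRel; decide +kernel)
    · exact Or.inr rfl
    · rw [T_eq, mm_spec, mm_spec] at h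
      exact absurd h (by unfold toRel; decide +kernel)
  · rintro (rfl | rfl)
    · rw [S_eq, T_eq, mm_spec]
      unfold toRel; decide +kernel
    · rw [S_eq, T_eq, mm_spec, mm_spec]
      unfold toRel; decide +kernel
end
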